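/- Let X ⊂ ℝ^n be a closed semi-algebraic set, X_1 = {(tx, t) : x ∈ X, t ∈ (0,1]} ⊂ ℝ^n × ℝ, and for t ∈ [0,1] let X_t = π_{ℝ^n}(closure(X_1) ∩ π_ℝ^{-1}(t)). Then X_0 is a closed semi-algebraic cone: for all x ∈ X_0 and λ ≥ 0 with λx making sense (λ ∈ [0,∞)), λx ∈ X_0, and 0 ∈ X_0 when X is nonempty. -/

import Mathlib

open Set

/-- Semi-algebraic subsets of `ι → ℝ`: the smallest collection of sets containing the
basic sets `{x | p(x) = 0}` and `{x | p(x) > 0}` for real polynomials `p`, and closed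
under finite unions and intersections. -/
inductive IsSemialgebraic {ι : Type*} [Fintype ι] : Set (ι → ℝ) → Prop
  | eq (p : MvPolynomial ι ℝ) : IsSemialgebraic {x | MvPolynomial.eval x p = 0}
  | lt (p : MvPolynomial ι ℝ) : IsSemialgebraic {x | 0 < MvPolynomial.eval x p}
  | union {s t : Set (ι → ℝ)} : IsSemialgebraic s → IsSemialgebraic t →
      IsSemialgebraic (s ∪ t)
  | inter {s t : Set (ι → ℝ)} : IsSemialgebraic s → IsSemialgebraic t →
      IsSemialgebraic (s ∩ t)

/-- A subset of euclidean space `ℝ^n` is semi-algebraic. -/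
def IsSemialgebraicE {n : ℕ} (s : Set (EuclideanSpace ℝ (Fin n))) : Prop :=
  IsSemialgebraic {x : Fin n → ℝ | (EuclideanSpace.equiv (Fin n) ℝ).symm x ∈ s}

/-- The deformation `X₁ = {(tx, t) : x ∈ X, t ∈ (0,1]} ⊂ ℝ^n × ℝ` of a set `X ⊂ ℝ^n`. -/
def deformAtInfinity {n : ℕ} (X : Set (EuclideanSpace ℝ (Fin n))) :
    Set (EuclideanSpace ℝ (Fin n) × ℝ) :=
  {p | ∃ x ∈ X, ∃ t ∈ Ioc (0 : ℝ) 1, p = (t • x, t)}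

/-- The tangent cone at infinity
`X₀ = π_{ℝ^n}(closure X₁ ∩ π_ℝ^{-1}(0)) = {y | (y,0) ∈ closure X₁}` of `X ⊂ ℝ^n`. -/
def coneAtInfinity {n : ℕ} (X : Set (EuclideanSpace ℝ (Fin n))) :
    Set (EuclideanSpace ℝ (Fin n)) :=
  {y | (y, (0 : ℝ)) ∈ closure (deformAtInfinity X)}

/-!
Fix finitely many polynomials in one variable `y` with coefficients depending on a parameter `x`.
The signs of finitely many polynomials in `x` determine, up to an increasing reparametrisation of
the line, the sign pattern of the family as a function of `y`. This goes by induction on the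
degrees: to add a polynomial `p` of maximal degree to a family with known sign pattern, one needs
the sign of `p` at the zeros of the others and of its derivative, which is the sign there of a
pseudo-remainder of `p`, of smaller degree. Between consecutive such zeros `p` is injective by
Rolle's theorem, so its zeros are located by the intermediate value theorem.

Hence projections, complements and closures of semi-algebraic sets are semi-algebraic, and the cone
at infinity is a slice of the closure of the semi-algebraic set `X₁`.
-/

open Asymptotics Filter Polynomial SignType Topology
open scoped PowerSeries

section OrderIso

variable {K : Type*} [Field K] [LinearOrder K] [IsStrictOrderedRing K]

theorem exists_orderIso_apply_eq_forall_le {m u v : K} (hu : m < u) (hv : m < v) :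
    ∃ θ : K ≃o K, θ u = v ∧ ∀ x ≤ m, θ x = x := by
  wlog huv : u ≤ v generalizing u v
  · obtain ⟨θ, hθ, hfix⟩ := this hv hu (le_of_not_ge huv)
    exact ⟨θ.symm, by simp [← hθ], fun x hx ↦ by simp [OrderIso.symm_apply_eq, hfix x hx]⟩
  obtain ⟨c, hc, hcu⟩ : ∃ c : K, 1 ≤ c ∧ m + c * (u - m) = v := by
    have hum : 0 < u - m := sub_pos.2 hu
    refine ⟨(v - m) / (u - m), (one_le_div hum).2 (by linarith), ?_⟩
    rw [div_mul_cancel₀ _ hum.ne', add_sub_cancel]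
  have hc0 : 0 < c := one_pos.trans_le hc
  have hfix : ∀ x ≤ m, max x (m + c * (x - m)) = x := fun x hx ↦
    max_eq_left (by nlinarith)
  have hmono : StrictMono fun x ↦ max x (m + c * (x - m)) :=
    fun x y hxy ↦ max_lt_max hxy (by simpa [hc0] using hxy)
  have hsurj : Function.Surjective fun x ↦ max x (m + c * (x - m)) := by
    intro y
    rcases le_total y m with hy | hy
    · exact ⟨y, hfix y hy⟩
    · refine ⟨m + (y - m) / c, ?_⟩
      have : (y - m) / c ≤ y - m := div_le_self (sub_nonneg.2 hy) hc
      simp only [add_sub_cancel_left, mul_div_cancel₀ _ hc0.ne', add_sub_cancel]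
      exact max_eq_right (by linarith)
  refine ⟨hmono.orderIsoOfSurjective _ hsurj, ?_, hfix⟩
  simp [hcu, huv]

theorem exists_orderIso_eqOn (A : Finset K) {e : K → K} (he : StrictMonoOn e A) :
    ∃ θ : K ≃o K, EqOn θ e A := by
  induction A using Finset.induction_on_max with
  | empty => exact ⟨OrderIso.refl K, by simp⟩
  | insert a s ha ih =>
    obtain ⟨ψ, hψ⟩ := ih (he.mono (by simp))
    obtain ⟨m, hsm, hm⟩ : ∃ m, (∀ y ∈ s.image e, y < m) ∧ ∀ y ∈ ({ψ a, e a} : Finset K), m < y := by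
      refine Order.exists_between_finsets _ _ fun y hy z hz ↦ ?_
      obtain ⟨x, hx, rfl⟩ := Finset.mem_image.1 hy
      rcases Finset.mem_insert.1 hz with rfl | hz
      · exact hψ hx ▸ ψ.strictMono (ha x hx)
      · exact Finset.mem_singleton.1 hz ▸ he (by simp [hx]) (by simp) (ha x hx)
    obtain ⟨θ, hθa, hθ⟩ := exists_orderIso_apply_eq_forall_le (hm (ψ a) (by simp))
      (hm (e a) (by simp))
    refine ⟨ψ.trans θ, fun x hx ↦ ?_⟩
    rcases Finset.mem_insert.1 hx with rfl | hx
    · exact hθa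
    · rw [OrderIso.trans_apply, hψ hx]
      exact hθ _ (hsm _ (Finset.mem_image_of_mem e hx)).le

end OrderIso

section SamePosition

variable {α : Type*} [LinearOrder α] {Z : Finset α} {x y z : α}

/-- Two points of a linear order have the same position relative to a finite set `Z` if they
compare in the same way with each point of `Z`, that is, if they are equal points of `Z` or lie in
the same component of its complement. -/
def SamePosition (Z : Finset α) (x y : α) : Prop :=
  ∀ z ∈ Z, (z < x ↔ z < y) ∧ (x < z ↔ y < z)

theorem SamePosition.refl (Z : Finset α) (x : α) : SamePosition Z x x :=
  fun _ _ ↦ ⟨.rfl, .rfl⟩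

theorem SamePosition.trans {w : α} (h : SamePosition Z x y) (h' : SamePosition Z y w) :
    SamePosition Z x w :=
  fun z hz ↦ ⟨(h z hz).1.trans (h' z hz).1, (h z hz).2.trans (h' z hz).2⟩

theorem SamePosition.symm (h : SamePosition Z x y) : SamePosition Z y x :=
  fun z hz ↦ ⟨(h z hz).1.symm, (h z hz).2.symm⟩

theorem SamePosition.eq_of_mem (h : SamePosition Z x y) (hx : x ∈ Z) : x = y :=
  le_antisymm (not_lt.1 ((h x hx).2.not.1 (lt_irrefl x)))
    (not_lt.1 ((h x hx).1.not.1 (lt_irrefl x)))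

theorem SamePosition.disjoint_uIcc (h : SamePosition Z x y) (hx : x ∉ Z) :
    Disjoint (uIcc x y) (Z : Set α) := by
  refine disjoint_left.2 fun z hz hzZ ↦ ?_
  have := h z hzZ
  grind [mem_uIcc]

theorem samePosition_orderIso {θ : α ≃o α} (hθ : ∀ z ∈ Z, θ z = z) (x : α) :
    SamePosition Z x (θ x) := fun z hz ↦ by
  nth_rw 2 [← hθ z hz]
  nth_rw 4 [← hθ z hz]
  simp

theorem samePosition_of_disjoint_Ioo {a b : α} (h : Disjoint (Ioo a b) (Z : Set α))
    (hx : x ∈ Ioo a b) (hy : y ∈ Ioo a b) : SamePosition Z x y := fun z hz ↦ by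
  have : z ≤ a ∨ b ≤ z := by
    by_contra! hz'
    exact disjoint_left.1 h hz' hz
  grind

theorem exists_mem_Ioo_disjoint {a b : α} (ha : a ∈ Z) (hb : b ∈ Z) (hx : x ∈ Ioo a b)
    (hxZ : x ∉ Z) : ∃ a' ∈ Z, ∃ b' ∈ Z, x ∈ Ioo a' b' ∧ Disjoint (Ioo a' b') (Z : Set α) := by
  obtain ⟨a', ha', hmax⟩ := (Z.filter (· < x)).exists_max_image id ⟨a, by simp [ha, hx.1]⟩
  obtain ⟨b', hb', hmin⟩ := (Z.filter (x < ·)).exists_min_image id ⟨b, by simp [hb, hx.2]⟩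
  simp only [Finset.mem_filter, id] at ha' hb' hmax hmin
  refine ⟨a', ha'.1, b', hb'.1, ⟨ha'.2, hb'.2⟩, disjoint_left.2 fun z hz hzZ ↦ ?_⟩
  rcases lt_trichotomy z x with h | rfl | h
  · exact hz.1.not_ge (hmax z ⟨hzZ, h⟩)
  · exact hxZ hzZ
  · exact hz.2.not_ge (hmin z ⟨hzZ, h⟩)

end SamePosition

section SignCompatible

variable {Z : Finset ℝ} {f g : ℝ → ℝ} {a b x y : ℝ}

theorem sign_eq_of_isPreconnected {X : Type*} [TopologicalSpace X] {s : Set X}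
    (hs : IsPreconnected s) {q : X → ℝ} (hq : ContinuousOn q s) (h0 : ∀ x ∈ s, q x ≠ 0) {x y : X}
    (hx : x ∈ s) (hy : y ∈ s) : sign (q x) = sign (q y) :=
  hs.constant (fun x hx ↦
    (continuousAt_sign_of_ne_zero (h0 x hx)).comp_continuousWithinAt (hq x hx)) hx hy

theorem SamePosition.sign_eq {q : ℝ → ℝ} (h : SamePosition Z x y) (hq : Continuous q)
    (hZ : ∀ x, q x = 0 → x ∈ Z) : sign (q x) = sign (q y) := by
  by_cases hx : x ∈ Z
  · rw [h.eq_of_mem hx]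
  · exact sign_eq_of_isPreconnected isPreconnected_uIcc hq.continuousOn
      (fun u hu hu0 ↦ disjoint_left.1 (h.disjoint_uIcc hx) hu (hZ u hu0))
      left_mem_uIcc right_mem_uIcc

theorem exists_mem_Ioo_sign_eq (hab : a < b) (hg : ContinuousOn g (Icc a b)) {c : ℝ}
    (hc : c ∈ Icc a b) (hgc : g c ≠ 0) : ∃ y ∈ Ioo a b, sign (g y) = sign (g c) := by
  have hsign : ContinuousWithinAt (sign ∘ g) (Ioo a b) c :=
    (continuousAt_sign_of_ne_zero hgc).comp_continuousWithinAt ((hg c hc).mono Ioo_subset_Icc_self)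
  have : (𝓝[Ioo a b] c).NeBot := by
    rwa [← mem_closure_iff_nhdsWithin_neBot, closure_Ioo hab.ne]
  have hev : ∀ᶠ y in 𝓝[Ioo a b] c, sign (g y) = sign (g c) :=
    hsign.eventually_mem (mem_nhds_discrete.2 rfl : {sign (g c)} ∈ 𝓝 (sign (g c)))
  exact (eventually_mem_nhdsWithin.and hev).exists

theorem exists_mem_Ioo_sign_eq_of_strictMonoOn (hf : StrictMonoOn f (Icc a b))
    (hg : ContinuousOn g (Icc a b)) (ha : sign (f a) = sign (g a)) (hb : sign (f b) = sign (g b))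
    (hx : x ∈ Ioo a b) : ∃ y ∈ Ioo a b, sign (g y) = sign (f x) := by
  have hab := hx.1.trans hx.2
  have hax := hf (left_mem_Icc.2 hab.le) (Ioo_subset_Icc_self hx) hx.1
  have hxb := hf (Ioo_subset_Icc_self hx) (right_mem_Icc.2 hab.le) hx.2
  rcases lt_trichotomy (f x) 0 with hneg | hzero | hpos
  · have hga : g a < 0 := sign_eq_neg_one_iff.1 (by rw [← ha, sign_neg (hax.trans hneg)])
    simpa [sign_neg hneg, sign_neg hga] using
      exists_mem_Ioo_sign_eq hab hg (left_mem_Icc.2 hab.le) hga.ne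
  · have hga : g a < 0 := sign_eq_neg_one_iff.1 (by rw [← ha, sign_neg (hzero ▸ hax)])
    have hgb : 0 < g b := sign_eq_one_iff.1 (by rw [← hb, sign_pos (hzero ▸ hxb)])
    obtain ⟨y, hy, hgy⟩ := intermediate_value_Ioo hab.le hg ⟨hga, hgb⟩
    exact ⟨y, hy, by rw [hgy, hzero]⟩
  · have hgb : 0 < g b := sign_eq_one_iff.1 (by rw [← hb, sign_pos (hpos.trans hxb)])
    simpa [sign_pos hpos, sign_pos hgb] using
      exists_mem_Ioo_sign_eq hab hg (right_mem_Icc.2 hab.le) hgb.ne'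

theorem exists_mem_Ioo_sign_eq_of_injOn (hf : ContinuousOn f (Icc a b))
    (hfi : InjOn f (Icc a b)) (hg : ContinuousOn g (Icc a b)) (ha : sign (f a) = sign (g a))
    (hb : sign (f b) = sign (g b)) (hx : x ∈ Ioo a b) : ∃ y ∈ Ioo a b, sign (g y) = sign (f x) := by
  rcases hf.strictMonoOn_of_injOn_Icc' (hx.1.trans hx.2).le hfi with hmono | hanti
  · exact exists_mem_Ioo_sign_eq_of_strictMonoOn hmono hg ha hb hx
  · obtain ⟨y, hy, hxy⟩ := exists_mem_Ioo_sign_eq_of_strictMonoOn hanti.neg hg.neg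
      (x := x) (by simp [Left.sign_neg, ha]) (by simp [Left.sign_neg, hb]) hx
    exact ⟨y, hy, by simpa [Left.sign_neg] using hxy⟩

theorem sign_eq_of_zeros_subset (hf : Continuous f) (hg : Continuous g)
    (hfZ : ∀ x, f x = 0 → x ∈ Z) (hgZ : ∀ x, g x = 0 → x ∈ Z)
    (hfg : ∀ z ∈ Z, sign (f z) = sign (g z)) (ha : a ∈ Z) (hb : b ∈ Z)
    (hab : Disjoint (Ioo a b) (Z : Set ℝ)) (hne : f a ≠ f b) (hx : x ∈ Ioo a b) :
    sign (f x) = sign (g x) := by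
  obtain ⟨t, htZ, ht, hft⟩ : ∃ t ∈ Z, t ∈ Icc a b ∧ f t ≠ 0 := by
    have hab' := (hx.1.trans hx.2).le
    by_contra! h0
    exact hne (by rw [h0 a ha ⟨le_rfl, hab'⟩, h0 b hb ⟨hab', le_rfl⟩])
  have hconst : ∀ q : ℝ → ℝ, Continuous q → (∀ u, q u = 0 → u ∈ Z) → q t ≠ 0 →
      sign (q x) = sign (q t) := fun q hq hqZ hqt ↦ by
    refine sign_eq_of_isPreconnected isPreconnected_uIcc hq.continuousOn (fun u hu hu0 ↦ ?_)
      left_mem_uIcc right_mem_uIcc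
    have huab : u ∉ Ioo a b := fun huab ↦ disjoint_left.1 hab huab (hqZ u hu0)
    have hut : u = t := by grind [mem_uIcc]
    exact hqt (hut ▸ hu0)
  rw [hconst f hf hfZ hft, hfg t htZ, hconst g hg hgZ]
  rwa [← sign_ne_zero, ← hfg t htZ, sign_ne_zero]

/-- The hypotheses under which two functions on the line have the same sign pattern: they are
continuous, have equal signs at the points of the finite set `Z`, are injective between
consecutive points of `Z`, and have equal constant signs on each side of the range of `Z`. -/
structure SignCompatible (Z : Finset ℝ) (f g : ℝ → ℝ) : Prop where
  continuous_left : Continuous f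
  continuous_right : Continuous g
  sign_eq : ∀ z ∈ Z, sign (f z) = sign (g z)
  injOn_left : ∀ x y, Disjoint (Ioo x y) (Z : Set ℝ) → InjOn f (Icc x y)
  injOn_right : ∀ x y, Disjoint (Ioo x y) (Z : Set ℝ) → InjOn g (Icc x y)
  lower : ∃ m ∈ Z, ∀ x ≤ m, ∀ y ≤ m, sign (f x) = sign (g y)
  upper : ∃ M ∈ Z, ∀ x, M ≤ x → ∀ y, M ≤ y → sign (f x) = sign (g y)

namespace SignCompatible

theorem symm (h : SignCompatible Z f g) : SignCompatible Z g f where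
  continuous_left := h.continuous_right
  continuous_right := h.continuous_left
  sign_eq z hz := (h.sign_eq z hz).symm
  injOn_left := h.injOn_right
  injOn_right := h.injOn_left
  lower := h.lower.imp fun _ hm ↦ ⟨hm.1, fun x hx y hy ↦ (hm.2 y hy x hx).symm⟩
  upper := h.upper.imp fun _ hM ↦ ⟨hM.1, fun x hx y hy ↦ (hM.2 y hy x hx).symm⟩

theorem eq_of_samePosition (h : SignCompatible Z f g) (hxy : SamePosition Z x y)
    (hf : f x = f y) : x = y := by
  by_cases hx : x ∈ Z
  · exact hxy.eq_of_mem hx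
  · exact h.injOn_left _ _ ((hxy.disjoint_uIcc hx).mono_left Ioo_subset_Icc_self)
      left_mem_uIcc right_mem_uIcc hf

theorem exists_samePosition_sign_eq (h : SignCompatible Z f g) (x : ℝ) :
    ∃ y, SamePosition Z x y ∧ sign (g y) = sign (f x) := by
  obtain ⟨m, hmZ, hm⟩ := h.lower
  obtain ⟨M, hMZ, hM⟩ := h.upper
  by_cases hxZ : x ∈ Z
  · exact ⟨x, .refl Z x, (h.sign_eq x hxZ).symm⟩
  rcases le_or_gt x m with hxm | hmx
  · exact ⟨x, .refl Z x, (hm x hxm x hxm).symm⟩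
  rcases le_or_gt M x with hMx | hxM
  · exact ⟨x, .refl Z x, (hM x hMx x hMx).symm⟩
  obtain ⟨a, ha, b, hb, hx, hab⟩ := exists_mem_Ioo_disjoint hmZ hMZ ⟨hmx, hxM⟩ hxZ
  obtain ⟨y, hy, hxy⟩ := exists_mem_Ioo_sign_eq_of_injOn h.continuous_left.continuousOn
    (h.injOn_left a b hab) h.continuous_right.continuousOn (h.sign_eq a ha) (h.sign_eq b hb) hx
  exact ⟨y, samePosition_of_disjoint_Ioo hab hx hy, hxy⟩

theorem strictMonoOn_zeros (h : SignCompatible Z f g) {e : ℝ → ℝ}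
    (he : ∀ x, SamePosition Z x (e x)) : StrictMonoOn e (Z ∪ {x | f x = 0}) := by
  intro s hs t ht hst
  by_cases hdisj : Disjoint (Icc s t) (Z : Set ℝ)
  · have hs0 : f s = 0 := hs.resolve_left (disjoint_left.1 hdisj ⟨le_rfl, hst.le⟩)
    have ht0 : f t = 0 := ht.resolve_left (disjoint_left.1 hdisj ⟨hst.le, le_rfl⟩)
    exact absurd (h.injOn_left s t (hdisj.mono_left Ioo_subset_Icc_self) ⟨le_rfl, hst.le⟩
      ⟨hst.le, le_rfl⟩ (hs0.trans ht0.symm)) hst.ne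
  · obtain ⟨z, ⟨hsz, hzt⟩, hz⟩ := not_disjoint_iff.1 hdisj
    rcases hsz.eq_or_lt with rfl | hsz
    · rw [← (he s).eq_of_mem hz]
      exact (he t s hz).1.1 hst
    · rcases hzt.eq_or_lt with rfl | hzt
      · rw [← (he z).eq_of_mem hz]
        exact (he s z hz).2.1 hst
      · exact ((he s z hz).2.1 hsz).trans ((he t z hz).1.1 hzt)

theorem eq_zero_left_of_eq_zero_right (h : SignCompatible Z f g) {θ : ℝ ≃o ℝ}
    (hθZ : ∀ z ∈ Z, θ z = z) (hθ : ∀ x, f x = 0 → g (θ x) = 0) (hx : g (θ x) = 0) : f x = 0 := by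
  obtain ⟨u, hxu, hu⟩ := h.symm.exists_samePosition_sign_eq (θ x)
  rw [hx, sign_zero, sign_eq_zero_iff] at hu
  have hpos : SamePosition Z (θ x) (θ u) := hxu.trans (samePosition_orderIso hθZ u)
  rwa [θ.injective (h.symm.eq_of_samePosition hpos (hx.trans (hθ u hu).symm))]

theorem exists_orderIso (h : SignCompatible Z f g) (hf : {x | f x = 0}.Finite) :
    ∃ θ : ℝ ≃o ℝ, (∀ z ∈ Z, θ z = z) ∧ ∀ x, sign (f x) = sign (g (θ x)) := by
  obtain ⟨m, hmZ, hm⟩ := h.lower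
  obtain ⟨M, hMZ, hM⟩ := h.upper
  choose e he hsign using h.exists_samePosition_sign_eq
  set T : Finset ℝ := Z ∪ hf.toFinset with hT
  have hTcoe : (T : Set ℝ) = (Z : Set ℝ) ∪ {x | f x = 0} := by simp [hT]
  obtain ⟨θ, hθT⟩ := exists_orderIso_eqOn T (hTcoe ▸ h.strictMonoOn_zeros he)
  have hθZ : ∀ z ∈ Z, θ z = z := fun z hz ↦
    (hθT (hTcoe ▸ .inl hz)).trans ((he z).eq_of_mem hz).symm
  have hθ : ∀ t ∈ T, sign (g (θ t)) = sign (f t) := fun t ht ↦ by rw [hθT ht, hsign]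
  have hfT : ∀ x, f x = 0 → x ∈ T := fun x hx ↦ by simp [hT, hx]
  have hgT : ∀ x, g (θ x) = 0 → x ∈ T := fun x hx ↦ hfT x <|
    h.eq_zero_left_of_eq_zero_right hθZ
      (fun u hu ↦ sign_eq_zero_iff.1 (by rw [hθ u (hfT u hu), hu, sign_zero])) hx
  refine ⟨θ, hθZ, fun x ↦ ?_⟩
  by_cases hxT : x ∈ T
  · exact (hθ x hxT).symm
  rcases le_or_gt x m with hxm | hmx
  · exact hm x hxm _ (hθZ m hmZ ▸ θ.monotone hxm)
  rcases le_or_gt M x with hMx | hxM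
  · exact hM x hMx _ (hθZ M hMZ ▸ θ.monotone hMx)
  obtain ⟨a, ha, b, hb, hx, hab⟩ := exists_mem_Ioo_disjoint (Finset.mem_union_left _ hmZ)
    (Finset.mem_union_left _ hMZ) ⟨hmx, hxM⟩ hxT
  refine sign_eq_of_zeros_subset h.continuous_left (h.continuous_right.comp θ.continuous) hfT hgT
    (fun t ht ↦ (hθ t ht).symm) ha hb hab (fun heq ↦ hx.1.trans hx.2 |>.ne ?_) hx
  exact h.injOn_left a b (hab.mono_right (by simp)) ⟨le_rfl, (hx.1.trans hx.2).le⟩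
    ⟨(hx.1.trans hx.2).le, le_rfl⟩ heq

end SignCompatible

end SignCompatible

section RealPolynomial

theorem injOn_Icc_of_deriv_ne_zero {f : ℝ → ℝ} {a b : ℝ} (hf : ContinuousOn f (Icc a b))
    (hf' : ∀ x ∈ Ioo a b, deriv f x ≠ 0) : InjOn f (Icc a b) := by
  intro x hx y hy hxy
  by_contra! hne
  wlog hlt : x < y generalizing x y
  · exact this hy hx hxy.symm hne.symm (lt_of_le_of_ne (not_lt.1 hlt) hne.symm)
  obtain ⟨c, hc, hfc⟩ := exists_deriv_eq_zero hlt (hf.mono (Icc_subset_Icc hx.1 hy.2)) hxy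
  exact hf' c (Ioo_subset_Ioo hx.1 hy.2 hc) hfc

theorem injOn_eval_Icc {p : ℝ[X]} {a b : ℝ} (hp : ∀ x ∈ Ioo a b, (derivative p).eval x ≠ 0) :
    InjOn (fun x ↦ p.eval x) (Icc a b) :=
  injOn_Icc_of_deriv_ne_zero p.continuousOn (by simpa using hp)

theorem eventually_sign_eq_of_isEquivalent {γ : Type*} {l : Filter γ} {u v : γ → ℝ}
    (h : u ~[l] v) : ∀ᶠ x in l, sign (u x) = sign (v x) := by
  obtain ⟨c, hc, huv⟩ := h.exists_eq_mul
  filter_upwards [hc.eventually (lt_mem_nhds one_pos), huv] with x hx huvx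
  rw [huvx, Pi.mul_apply, sign_mul, sign_pos hx, one_mul]

theorem eventually_sign_eval_atTop (p : ℝ[X]) :
    ∀ᶠ x in atTop, sign (p.eval x) = sign p.leadingCoeff := by
  filter_upwards [eventually_sign_eq_of_isEquivalent p.isEquivalent_atTop_lead,
    eventually_gt_atTop 0] with x hx hpos
  rw [hx, sign_mul, sign_pow, sign_pos hpos, one_pow, mul_one]

theorem eventually_sign_eval_atBot (p : ℝ[X]) :
    ∀ᶠ x in atBot, sign (p.eval x) = sign p.leadingCoeff * (-1) ^ p.natDegree := by
  filter_upwards [eventually_sign_eq_of_isEquivalent p.isEquivalent_atBot_lead,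
    eventually_lt_atBot 0] with x hx hneg
  rw [hx, sign_mul, sign_pow, sign_neg hneg]

variable {p q : ℝ[X]}

theorem exists_forall_ge_sign_eval_eq (hlc : sign p.leadingCoeff = sign q.leadingCoeff)
    (φ : ℝ ≃o ℝ) : ∃ M, ∀ x, M ≤ x → ∀ y, M ≤ y → sign (p.eval x) = sign (q.eval (φ y)) := by
  obtain ⟨M, hM⟩ := eventually_atTop.1 <| (eventually_sign_eval_atTop p).and <|
    φ.tendsto_atTop.eventually (eventually_sign_eval_atTop q)
  exact ⟨M, fun x hx y hy ↦ by rw [(hM x hx).1, (hM y hy).2, hlc]⟩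

theorem exists_forall_le_sign_eval_eq (hdeg : p.natDegree = q.natDegree)
    (hlc : sign p.leadingCoeff = sign q.leadingCoeff) (φ : ℝ ≃o ℝ) :
    ∃ m, ∀ x ≤ m, ∀ y ≤ m, sign (p.eval x) = sign (q.eval (φ y)) := by
  obtain ⟨m, hm⟩ := eventually_atBot.1 <| (eventually_sign_eval_atBot p).and <|
    φ.tendsto_atBot.eventually (eventually_sign_eval_atBot q)
  exact ⟨m, fun x hx y hy ↦ by rw [(hm x hx).1, (hm y hy).2, hlc, hdeg]⟩

end RealPolynomial

section PseudoDivision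

variable {R : Type*} [CommRing R]

theorem exists_leadingCoeff_pow_mul_eq_mul_add (p : R[X]) {q : R[X]} (hq : 0 < q.natDegree) :
    ∃ r : R[X], r.natDegree < q.natDegree ∧
      ∃ (k : ℕ) (s : R[X]), C (q.leadingCoeff ^ k) * p = q * s + r := by
  induction hn : p.natDegree using Nat.strong_induction_on generalizing p with
  | _ n ih =>
    rcases lt_or_ge p.natDegree q.natDegree with hlt | hle
    · exact ⟨p, hlt, 0, 0, by simp⟩
    · obtain ⟨r, hr, k, s, hs⟩ := ih _
        (hn ▸ natDegree_cancelLeads_lt_of_natDegree_le_natDegree hle (hq.trans_le hle)) _ rfl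
      refine ⟨r, hr, k + 1,
        s + C (q.leadingCoeff ^ k) * (C p.leadingCoeff * X ^ (p.natDegree - q.natDegree)), ?_⟩
      rw [cancelLeads, Nat.sub_eq_zero_of_le hle] at hs
      simp only [pow_succ, map_mul, pow_zero, mul_one] at hs ⊢
      linear_combination hs

theorem exists_finset_pseudoRemainders (p : R[X]) (S : Finset R[X]) :
    ∃ H : Finset R[X], (∀ r ∈ H, ∃ q ∈ S, r.natDegree < q.natDegree) ∧
      ∀ q ∈ S, 0 < q.natDegree → ∃ r ∈ H,
        ∃ (k : ℕ) (s : R[X]), C (q.leadingCoeff ^ k) * p = q * s + r := by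
  classical
  choose! r hr hrs using fun q : R[X] ↦ exists_leadingCoeff_pow_mul_eq_mul_add (q := q) p
  refine ⟨(S.filter (0 < ·.natDegree)).image r, ?_, fun q hq hq0 ↦
    ⟨r q, Finset.mem_image_of_mem r (Finset.mem_filter.2 ⟨hq, hq0⟩), hrs q hq0⟩⟩
  simp only [Finset.forall_mem_image, Finset.mem_filter]
  exact fun q hq ↦ ⟨q, hq.1, hr q hq.2⟩

theorem map_trunc_eq_map {S : Type*} [CommRing S] {α : R →+* S} {q : R[X]} {j : ℕ}
    (h : (q.map α).natDegree ≤ j) :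
    (PowerSeries.trunc (j + 1) (q : R⟦X⟧)).map α = q.map α := by
  ext i
  rcases lt_or_ge i (j + 1) with hi | hi
  · simp [PowerSeries.coeff_trunc, hi]
  · rw [coeff_eq_zero_of_natDegree_lt (p := q.map α) (by lia)]
    simp [PowerSeries.coeff_trunc, hi.not_gt]

end PseudoDivision

section SignDiagram

variable {A : Type*} [CommRing A] {F G Q : Finset A[X]} {α β : A →+* ℝ} {φ : ℝ ≃o ℝ} {p : A[X]}

/-- Two real specialisations `α` and `β` of the coefficient ring `A` give the same sign to each
element of `S`. -/
def SameSigns (S : Finset A) (α β : A →+* ℝ) : Prop :=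
  ∀ c ∈ S, sign (α c) = sign (β c)

/-- The order automorphism `φ` of the line carries the signs of the polynomials of `F`
specialised along `α` to the signs of the same polynomials specialised along `β`. -/
def MatchesSigns (φ : ℝ ≃o ℝ) (F : Finset A[X]) (α β : A →+* ℝ) : Prop :=
  ∀ p ∈ F, ∀ x, sign ((p.map α).eval x) = sign ((p.map β).eval (φ x))

/-- The two specialisations of the family `F` along `α` and `β` have the same sign diagram on the
line: the successive sign vectors, read from left to right, are the same. -/
def SameSignDiagram (F : Finset A[X]) (α β : A →+* ℝ) : Prop :=
  ∃ φ : ℝ ≃o ℝ, MatchesSigns φ F α β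

theorem SameSigns.mono {S T : Finset A} (h : SameSigns T α β) (hST : S ⊆ T) : SameSigns S α β :=
  fun c hc ↦ h c (hST hc)

theorem SameSignDiagram.mono (h : SameSignDiagram G α β) (hFG : F ⊆ G) : SameSignDiagram F α β :=
  h.imp fun _ hφ p hp ↦ hφ p (hFG hp)

theorem natDegree_map_eq_natDegree_map (h : ∀ i, sign (α (p.coeff i)) = sign (β (p.coeff i))) :
    (p.map α).natDegree = (p.map β).natDegree := by
  have hsupp : (p.map α).support = (p.map β).support := by
    ext i
    rw [mem_support_iff, mem_support_iff, coeff_map, coeff_map, ← sign_ne_zero, h, sign_ne_zero]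
  exact natDegree_eq_of_degree_eq (by rw [degree, degree, hsupp])

namespace MatchesSigns

theorem mono (h : MatchesSigns φ G α β) (hFG : F ⊆ G) : MatchesSigns φ F α β :=
  fun p hp ↦ h p (hFG hp)

theorem sign_eq_of_C_mem (h : MatchesSigns φ F α β) {c : A} (hc : C c ∈ F) :
    sign (α c) = sign (β c) := by
  simpa using h (C c) hc 0

theorem exists_signCompatible (h : MatchesSigns φ Q α β) (hder : derivative p ∈ Q)
    (hcoeff : ∀ i, sign (α (p.coeff i)) = sign (β (p.coeff i))) (hdeg : 0 < (p.map α).natDegree)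
    (hroots : ∀ q ∈ Q, ∀ z ∈ (q.map α).roots,
      sign ((p.map α).eval z) = sign ((p.map β).eval (φ z))) :
    ∃ Z : Finset ℝ, (∀ q ∈ Q, ∀ z ∈ (q.map α).roots, z ∈ Z) ∧
      SignCompatible Z (fun x ↦ (p.map α).eval x) (fun x ↦ (p.map β).eval (φ x)) := by
  classical
  have hdeg' := natDegree_map_eq_natDegree_map hcoeff
  have hlc : sign (p.map α).leadingCoeff = sign (p.map β).leadingCoeff := by
    rw [leadingCoeff, leadingCoeff, hdeg', coeff_map, coeff_map, hcoeff]
  obtain ⟨m, hm⟩ := exists_forall_le_sign_eval_eq hdeg' hlc φ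
  obtain ⟨M, hM⟩ := exists_forall_ge_sign_eval_eq hlc φ
  set Z : Finset ℝ := {m, M} ∪ Q.biUnion fun q ↦ (q.map α).roots.toFinset with hZ
  have hrootsZ : ∀ q ∈ Q, ∀ z ∈ (q.map α).roots, z ∈ Z := fun q hq z hz ↦
    Finset.mem_union_right _ (Finset.mem_biUnion.2 ⟨q, hq, Multiset.mem_toFinset.2 hz⟩)
  have hder0 : derivative (p.map α) ≠ 0 := fun h0 ↦
    hdeg.ne' (derivative_eq_zero.1 h0)
  have hcritical : ∀ x, (derivative (p.map α)).eval x = 0 → x ∈ Z := fun x hx ↦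
    hrootsZ _ hder x (by rw [← derivative_map]; exact (mem_roots hder0).2 hx)
  refine ⟨Z, hrootsZ, ⟨by fun_prop, (p.map β).continuous.comp φ.continuous, ?_, fun x y hxy ↦ ?_,
    fun x y hxy ↦ ?_, ⟨m, by simp [hZ], hm⟩, ⟨M, by simp [hZ], hM⟩⟩⟩
  · intro z hz
    simp only [hZ, Finset.mem_union, Finset.mem_insert, Finset.mem_singleton, Finset.mem_biUnion,
      Multiset.mem_toFinset] at hz
    rcases hz with (rfl | rfl) | ⟨q, hq, hqz⟩
    exacts [hm z le_rfl z le_rfl, hM z le_rfl z le_rfl, hroots q hq z hqz]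
  · exact injOn_eval_Icc fun u hu hu0 ↦ disjoint_left.1 hxy hu (hcritical u hu0)
  · have hinj : InjOn (fun u ↦ (p.map β).eval u) (Icc (φ x) (φ y)) := by
      refine injOn_eval_Icc fun u hu hu0 ↦ ?_
      obtain ⟨w, rfl⟩ := φ.surjective u
      refine disjoint_left.1 hxy (by simpa using hu) (hcritical w ?_)
      rw [derivative_map, ← sign_eq_zero_iff, h _ hder, ← derivative_map, hu0, sign_zero]
    exact hinj.comp φ.injective.injOn fun u hu ↦ by simpa using hu

theorem sameSignDiagram_insert [DecidableEq A[X]] (h : MatchesSigns φ Q α β)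
    (hder : derivative p ∈ Q) (hcoeff : ∀ i, sign (α (p.coeff i)) = sign (β (p.coeff i)))
    (hdeg : 0 < (p.map α).natDegree)
    (hroots : ∀ q ∈ Q, ∀ z ∈ (q.map α).roots,
      sign ((p.map α).eval z) = sign ((p.map β).eval (φ z))) :
    SameSignDiagram (insert p Q) α β := by
  obtain ⟨Z, hZ, hcompat⟩ := h.exists_signCompatible hder hcoeff hdeg hroots
  obtain ⟨θ, hθZ, hθ⟩ :=
    hcompat.exists_orderIso (finite_setOfPred_isRoot (ne_zero_of_natDegree_gt hdeg))
  refine ⟨θ.trans φ, fun q hq x ↦ ?_⟩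
  rcases Finset.mem_insert.1 hq with rfl | hq
  · exact hθ x
  rw [OrderIso.trans_apply, ← h q hq]
  by_cases hq0 : q.map α = 0
  · simp [hq0]
  · exact (samePosition_orderIso hθZ x).sign_eq (q.map α).continuous
      fun z hz ↦ hZ q hq z ((mem_roots hq0).2 hz)

end MatchesSigns

theorem sign_eval_map_eq_of_pseudoRemainder {r t s : A[X]} {k : ℕ} {x y : ℝ}
    (hrts : C (t.leadingCoeff ^ k) * p = t * s + r) (hx : (t.map α).eval x = 0)
    (hy : (t.map β).eval y = 0) (hlc : sign (α t.leadingCoeff) = sign (β t.leadingCoeff))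
    (hlc0 : α t.leadingCoeff ≠ 0) (hr : sign ((r.map α).eval x) = sign ((r.map β).eval y)) :
    sign ((p.map α).eval x) = sign ((p.map β).eval y) := by
  have hα := congrArg (fun u ↦ (u.map α).eval x) hrts
  have hβ := congrArg (fun u ↦ (u.map β).eval y) hrts
  simp only [Polynomial.map_mul, Polynomial.map_add, Polynomial.map_C, eval_mul, eval_add, eval_C,
    hx, hy, zero_mul, zero_add] at hα hβ
  rw [← hα, ← hβ, sign_mul, sign_mul, map_pow α, map_pow β, sign_pow, sign_pow, hlc] at hr
  exact mul_left_cancel₀ (pow_ne_zero k (hlc ▸ sign_ne_zero.2 hlc0)) hr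

theorem exists_finset_sign_eval_eq_at_roots (p : A[X]) {n : ℕ} (Q : Finset A[X])
    (hQ : ∀ q ∈ Q, q.natDegree ≤ n) :
    ∃ H : Finset A[X], (∀ r ∈ H, r.natDegree < n) ∧ ∀ {α β : A →+* ℝ} {φ : ℝ ≃o ℝ},
      MatchesSigns φ Q α β → MatchesSigns φ H α β →
      (∀ q ∈ Q, ∀ i, sign (α (q.coeff i)) = sign (β (q.coeff i))) →
      ∀ q ∈ Q, ∀ z ∈ (q.map α).roots, sign ((p.map α).eval z) = sign ((p.map β).eval (φ z)) := by
  classical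
  -- The degree of `q` can drop when its coefficients are specialised, so one divides by every
  -- truncation of `q`: one of them has the degree of the specialised polynomial.
  set S : Finset A[X] := Q.biUnion fun q ↦ (Finset.range (n + 1)).image fun j ↦
    PowerSeries.trunc (j + 1) (q : A⟦X⟧) with hS
  obtain ⟨H, hH, hrem⟩ := exists_finset_pseudoRemainders p S
  refine ⟨H, fun r hr ↦ ?_, fun {α β φ} hφQ hφH hcoeff q hq z hz ↦ ?_⟩
  · obtain ⟨t, ht, hrt⟩ := hH r hr
    simp only [hS, Finset.mem_biUnion, Finset.mem_image, Finset.mem_range] at ht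
    obtain ⟨q, -, j, hj, rfl⟩ := ht
    have := PowerSeries.natDegree_trunc_lt (q : A⟦X⟧) j
    lia
  have hq0 : q.map α ≠ 0 := ne_zero_of_mem_roots hz
  set j := (q.map α).natDegree with hj
  set t := PowerSeries.trunc (j + 1) (q : A⟦X⟧) with ht
  have htS : t ∈ S := Finset.mem_biUnion.2 ⟨q, hq, Finset.mem_image_of_mem _
    (Finset.mem_range_succ_iff.2 (natDegree_map_le.trans (hQ q hq)))⟩
  have htα : t.map α = q.map α := map_trunc_eq_map le_rfl
  have htβ : t.map β = q.map β := map_trunc_eq_map (natDegree_map_eq_natDegree_map (hcoeff q hq)).ge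
  have htdeg : t.natDegree = j := le_antisymm
    (Nat.lt_succ_iff.1 (PowerSeries.natDegree_trunc_lt _ j)) (hj ▸ htα ▸ natDegree_map_le)
  have htlc : t.leadingCoeff = q.coeff j := by
    rw [leadingCoeff, htdeg, ht, PowerSeries.coeff_trunc, if_pos j.lt_succ_self, coeff_coe]
  have hzα : (q.map α).eval z = 0 := isRoot_of_mem_roots hz
  have hzβ : (q.map β).eval (φ z) = 0 := by
    rw [← sign_eq_zero_iff, ← hφQ q hq, hzα, sign_zero]
  have hj0 : 0 < j := natDegree_pos_iff_degree_pos.2 (degree_pos_of_root hq0 hzα)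
  obtain ⟨r, hr, k, s, hrs⟩ := hrem t htS (htdeg ▸ hj0)
  refine sign_eval_map_eq_of_pseudoRemainder hrs (htα ▸ hzα) (htβ ▸ hzβ) (htlc ▸ hcoeff q hq j) ?_
    (hφH r hr z)
  rw [htlc, ← coeff_map]
  exact leadingCoeff_ne_zero.2 hq0

theorem map_eraseLead_eq_map {S : Type*} [CommRing S] {γ : A →+* S} (hγ : γ p.leadingCoeff = 0) :
    p.eraseLead.map γ = p.map γ := by
  conv_rhs => rw [← p.eraseLead_add_C_mul_X_pow, Polynomial.map_add, Polynomial.map_mul,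
    Polynomial.map_C, hγ, C_0, zero_mul, add_zero]

theorem exists_finset_sameSignDiagram_insert [DecidableEq A[X]] (hp : 0 < p.natDegree)
    (hG : ∀ q ∈ G, q.natDegree ≤ p.natDegree) :
    ∃ H : Finset A[X], (∀ r ∈ H, r.natDegree < p.natDegree) ∧
      ∀ α β : A →+* ℝ, SameSignDiagram (G ∪ H) α β → SameSignDiagram (insert p G) α β := by
  classical
  have hder : (derivative p).natDegree < p.natDegree := natDegree_derivative_lt hp.ne'
  obtain ⟨R, hR, hroots⟩ := exists_finset_sign_eval_eq_at_roots p (n := p.natDegree)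
    (insert (derivative p) G) (by simpa using ⟨hder.le, hG⟩)
  set D : Finset A := (insert p (insert (derivative p) G)).biUnion coeffs with hD
  set H : Finset A[X] := {derivative p, p.eraseLead} ∪ D.image C ∪ R with hH
  refine ⟨H, fun r hr ↦ ?_, fun α β ⟨φ, hφ⟩ ↦ ?_⟩
  · simp only [hH, Finset.mem_union, Finset.mem_insert, Finset.mem_singleton,
      Finset.mem_image] at hr
    rcases hr with ((rfl | rfl) | ⟨c, -, rfl⟩) | hr
    exacts [hder, (eraseLead_natDegree_le p).trans_lt (by lia), by simpa, hR r hr]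
  have hGH : insert (derivative p) G ⊆ G ∪ H :=
    Finset.insert_subset (by simp [hH]) Finset.subset_union_left
  have hcoeff : ∀ q ∈ insert p (insert (derivative p) G), ∀ i,
      sign (α (q.coeff i)) = sign (β (q.coeff i)) := fun q hq i ↦ by
    by_cases hi : q.coeff i = 0
    · simp [hi]
    · have hiD : q.coeff i ∈ D := Finset.mem_biUnion.2 ⟨q, hq, coeff_mem_coeffs hi⟩
      exact hφ.sign_eq_of_C_mem (by simp [hH, hiD])
  have hlc := hcoeff p (Finset.mem_insert_self _ _) p.natDegree
  by_cases hlc0 : α (p.coeff p.natDegree) = 0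
  · have hβ0 : β (p.coeff p.natDegree) = 0 := by rwa [← sign_eq_zero_iff, ← hlc, sign_eq_zero_iff]
    refine ⟨φ, fun q hq ↦ ?_⟩
    rcases Finset.mem_insert.1 hq with rfl | hq
    · rw [← map_eraseLead_eq_map hlc0, ← map_eraseLead_eq_map hβ0]
      exact hφ _ (by simp [hH])
    · exact hφ q (Finset.mem_union_left _ hq)
  · refine ((hφ.mono hGH).sameSignDiagram_insert (Finset.mem_insert_self _ _)
      (hcoeff p (Finset.mem_insert_self _ _)) ?_ ?_).mono
        (Finset.insert_subset_insert p (Finset.subset_insert _ G))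
    · rwa [natDegree_map_of_leadingCoeff_ne_zero α hlc0]
    · exact hroots (hφ.mono hGH) (hφ.mono fun r hr ↦ by simp [hH, hr])
        fun q hq ↦ hcoeff q (Finset.mem_insert_of_mem hq)

theorem isDershowitzMannaLT_union_insert {γ : Type*} [DecidableEq γ] {d : γ → ℕ} {c : γ}
    {S T : Finset γ} (hc : c ∉ S) (hT : ∀ t ∈ T, d t < d c) :
    Multiset.IsDershowitzMannaLT ((S ∪ T).val.map d) ((insert c S).val.map d) := by
  refine ⟨S.val.map d, (T \ S).val.map d, {d c}, by simp, ?_, ?_, ?_⟩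
  · rw [← Finset.union_sdiff_self_eq_union, ← Finset.disjUnion_eq_union _ _ Finset.disjoint_sdiff,
      Finset.disjUnion_val, Multiset.map_add]
  · rw [Finset.insert_val_of_notMem hc, Multiset.map_cons, ← Multiset.singleton_add, add_comm]
  · simp only [Multiset.mem_map, Multiset.mem_singleton, exists_eq_left, forall_exists_index,
      and_imp, forall_apply_eq_imp_iff₂]
    exact fun t ht ↦ hT t (Finset.sdiff_subset ht)

theorem exists_finset_sameSignDiagram_of_sameSigns (F : Finset A[X]) :
    ∃ S : Finset A, ∀ α β : A →+* ℝ, SameSigns S α β → SameSignDiagram F α β := by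
  classical
  -- A polynomial of maximal degree is traded for finitely many polynomials of smaller degree, so the
  -- multiset of degrees decreases.
  have hwf := InvImage.wf (fun F : Finset A[X] ↦ F.val.map natDegree)
    Multiset.wellFounded_isDershowitzMannaLT
  refine hwf.induction (C := fun F ↦ ∃ S : Finset A, ∀ α β : A →+* ℝ,
    SameSigns S α β → SameSignDiagram F α β) F fun F ih ↦ ?_
  by_cases hconst : ∀ p ∈ F, p.natDegree = 0
  · refine ⟨F.image (coeff · 0), fun α β h ↦ ⟨.refl ℝ, fun p hp x ↦ ?_⟩⟩
    rw [eq_C_of_natDegree_eq_zero (hconst p hp)]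
    simpa using h _ (Finset.mem_image_of_mem _ hp)
  · push Not at hconst
    obtain ⟨q, hq, hq0⟩ := hconst
    obtain ⟨p, hpF, hmax⟩ := F.exists_max_image natDegree ⟨q, hq⟩
    obtain ⟨H, hH, hstep⟩ := exists_finset_sameSignDiagram_insert (G := F.erase p)
      ((Nat.pos_of_ne_zero hq0).trans_le (hmax q hq)) fun r hr ↦ hmax r (Finset.mem_of_mem_erase hr)
    have hlt := isDershowitzMannaLT_union_insert (Finset.notMem_erase p F) hH
    rw [Finset.insert_erase hpF] at hlt hstep
    obtain ⟨S, hS⟩ := ih _ hlt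
    exact ⟨S, fun α β h ↦ hstep α β (hS α β h)⟩

end SignDiagram

namespace IsSemialgebraic

variable {ι κ : Type*} [Fintype ι] [Fintype κ] {s t : Set (ι → ℝ)}

theorem setOf_eq (p q : MvPolynomial ι ℝ) :
    IsSemialgebraic {x | MvPolynomial.eval x p = MvPolynomial.eval x q} := by
  simpa [sub_eq_zero] using eq (p - q)

theorem setOf_lt (p q : MvPolynomial ι ℝ) :
    IsSemialgebraic {x | MvPolynomial.eval x p < MvPolynomial.eval x q} := by
  simpa using lt (q - p)

theorem setOf_sign_eq (p : MvPolynomial ι ℝ) (σ : SignType) :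
    IsSemialgebraic {x | sign (MvPolynomial.eval x p) = σ} := by
  cases σ with
  | zero => simpa [sign_eq_zero_iff] using eq p
  | neg => simpa [sign_eq_neg_one_iff] using setOf_lt p 0
  | pos => simpa [sign_eq_one_iff] using lt p

theorem empty : IsSemialgebraic (∅ : Set (ι → ℝ)) := by
  simpa using eq (1 : MvPolynomial ι ℝ)

theorem univ : IsSemialgebraic (univ : Set (ι → ℝ)) := by
  simpa using eq (0 : MvPolynomial ι ℝ)

theorem biUnion {γ : Type*} {J : Set γ} (hJ : J.Finite) {f : γ → Set (ι → ℝ)}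
    (hf : ∀ j ∈ J, IsSemialgebraic (f j)) : IsSemialgebraic (⋃ j ∈ J, f j) := by
  induction J, hJ using Set.Finite.induction_on with
  | empty => simpa using empty
  | insert _ _ ih =>
    rw [biUnion_insert]
    exact (hf _ (mem_insert _ _)).union (ih fun j hj ↦ hf j (mem_insert_of_mem _ hj))

theorem iInter {γ : Type*} [Finite γ] {f : γ → Set (ι → ℝ)}
    (hf : ∀ j, IsSemialgebraic (f j)) : IsSemialgebraic (⋂ j, f j) := by
  suffices ∀ J : Set γ, J.Finite → IsSemialgebraic (⋂ j ∈ J, f j) by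
    simpa using this Set.univ Set.finite_univ
  intro J hJ
  induction J, hJ using Set.Finite.induction_on with
  | empty => simpa using univ
  | insert _ _ ih =>
    rw [biInter_insert]
    exact (hf _).inter ih

theorem exists_finset_mem_iff_mem (hs : IsSemialgebraic s) :
    ∃ P : Finset (MvPolynomial ι ℝ), ∀ x y,
      SameSigns P (MvPolynomial.eval x) (MvPolynomial.eval y) → (x ∈ s ↔ y ∈ s) := by
  classical
  induction hs with
  | eq p =>
    refine ⟨{p}, fun x y h ↦ ?_⟩
    rw [mem_ofPred_eq, mem_ofPred_eq, ← sign_eq_zero_iff, h p (by simp), sign_eq_zero_iff]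
  | lt p =>
    refine ⟨{p}, fun x y h ↦ ?_⟩
    rw [mem_ofPred_eq, mem_ofPred_eq, ← sign_eq_one_iff, h p (by simp), sign_eq_one_iff]
  | union _ _ ihs iht =>
    obtain ⟨⟨P, hP⟩, Q, hQ⟩ := And.intro ihs iht
    exact ⟨P ∪ Q, fun x y h ↦ or_congr (hP x y (h.mono Finset.subset_union_left))
      (hQ x y (h.mono Finset.subset_union_right))⟩
  | inter _ _ ihs iht =>
    obtain ⟨⟨P, hP⟩, Q, hQ⟩ := And.intro ihs iht
    exact ⟨P ∪ Q, fun x y h ↦ and_congr (hP x y (h.mono Finset.subset_union_left))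
      (hQ x y (h.mono Finset.subset_union_right))⟩

theorem of_mem_iff_mem {P : Finset (MvPolynomial ι ℝ)} (hP : ∀ x y,
    SameSigns P (MvPolynomial.eval x) (MvPolynomial.eval y) → (x ∈ s ↔ y ∈ s)) :
    IsSemialgebraic s := by
  let signVector (x : ι → ℝ) (p : P) : SignType := sign (MvPolynomial.eval x p.1)
  have hs : s = ⋃ σ ∈ signVector '' s, ⋂ p, {x | signVector x p = σ p} := by
    ext x
    simp only [mem_iUnion, mem_iInter, mem_image, exists_prop, exists_exists_and_eq_and,
      mem_ofPred_eq]
    exact ⟨fun hx ↦ ⟨x, hx, fun _ ↦ rfl⟩,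
      fun ⟨y, hy, hxy⟩ ↦ (hP x y fun p hp ↦ hxy ⟨p, hp⟩).2 hy⟩
  rw [hs]
  exact biUnion (Set.toFinite _) fun σ _ ↦ iInter fun p ↦ setOf_sign_eq p.1 (σ p)

theorem compl (hs : IsSemialgebraic s) : IsSemialgebraic sᶜ := by
  obtain ⟨P, hP⟩ := hs.exists_finset_mem_iff_mem
  exact of_mem_iff_mem fun x y h ↦ (hP x y h).not

theorem preimage_eval (hs : IsSemialgebraic s) (f : ι → MvPolynomial κ ℝ) :
    IsSemialgebraic ((fun x i ↦ MvPolynomial.eval x (f i)) ⁻¹' s) := by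
  have heval : ∀ (p : MvPolynomial ι ℝ) x, MvPolynomial.eval (fun i ↦ MvPolynomial.eval x (f i)) p =
      MvPolynomial.eval x (MvPolynomial.bind₁ f p) := fun p x ↦
    (MvPolynomial.eval₂Hom_bind₁ (RingHom.id ℝ) x f p).symm
  induction hs with
  | eq p => simpa [heval] using eq (MvPolynomial.bind₁ f p)
  | lt p => simpa [heval] using lt (MvPolynomial.bind₁ f p)
  | union _ _ ihs iht => exact ihs.union iht
  | inter _ _ ihs iht => exact ihs.inter iht

theorem preimage_comp (hs : IsSemialgebraic s) (e : ι → κ) :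
    IsSemialgebraic ((fun x : κ → ℝ ↦ x ∘ e) ⁻¹' s) := by
  simpa [Function.comp_def] using hs.preimage_eval fun i ↦ MvPolynomial.X (e i)

theorem exists_option {s : Set (Option ι → ℝ)} (hs : IsSemialgebraic s) :
    IsSemialgebraic {x : ι → ℝ | ∃ y : ℝ, (fun o ↦ Option.elim o y x) ∈ s} := by
  classical
  obtain ⟨P, hP⟩ := hs.exists_finset_mem_iff_mem
  obtain ⟨S, hS⟩ :=
    exists_finset_sameSignDiagram_of_sameSigns (P.image (MvPolynomial.optionEquivLeft ℝ ι))
  refine of_mem_iff_mem (P := S) fun a b hab ↦ ?_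
  obtain ⟨φ, hφ⟩ := hS _ _ hab
  refine φ.toEquiv.exists_congr fun y ↦ hP _ _ fun p hp ↦ ?_
  rw [MvPolynomial.optionEquivLeft_elim_eval, MvPolynomial.optionEquivLeft_elim_eval]
  exact hφ _ (Finset.mem_image_of_mem _ hp) y

theorem exists_sum {s : Set (ι ⊕ κ → ℝ)} (hs : IsSemialgebraic s) :
    IsSemialgebraic {x : ι → ℝ | ∃ y : κ → ℝ, Sum.elim x y ∈ s} := by
  refine Fintype.induction_empty_option (P := fun κ _ ↦ ∀ s : Set (ι ⊕ κ → ℝ),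
    IsSemialgebraic s → IsSemialgebraic {x | ∃ y : κ → ℝ, Sum.elim x y ∈ s}) ?_ ?_ ?_ κ s hs
  · intro α β _ e ih s hs
    let := Fintype.ofEquiv β e.symm
    convert ih _ (hs.preimage_comp (Sum.map id e.symm)) using 3 with x
    refine (e.arrowCongr (.refl ℝ)).symm.exists_congr fun y ↦ ?_
    rw [mem_preimage, Sum.elim_comp_map]
    congr!
    ext
    simp
  · intro s hs
    convert hs.preimage_comp (Sum.elim id PEmpty.elim) using 1
    ext x
    rw [mem_ofPred_eq, Unique.exists_iff, mem_preimage]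
    congr! 1
    ext (_ | ⟨⟨⟩⟩)
    rfl
  · intro α _ ih s hs
    let e : ι ⊕ Option α → Option (ι ⊕ α) := Sum.elim (some ∘ .inl) (Option.map .inr)
    convert ih _ (hs.preimage_comp e).exists_option using 3 with x
    have helim : ∀ (y : α → ℝ) (r : ℝ), (fun o ↦ Option.elim o r (Sum.elim x y)) ∘ e =
        Sum.elim x (fun o ↦ Option.elim o r y) := fun y r ↦ by
      ext (i | _ | j) <;> rfl
    simp only [mem_ofPred_eq, mem_preimage, helim]
    refine ⟨fun ⟨y, hy⟩ ↦ ⟨y ∘ some, y none, ?_⟩, fun ⟨y, r, hy⟩ ↦ ⟨_, hy⟩⟩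
    convert hy using 2
    ext (_ | j) <;> rfl

theorem closure (hs : IsSemialgebraic s) : IsSemialgebraic (closure s) := by
  have hball : IsSemialgebraic {w : Option ι ⊕ ι → ℝ |
      ∀ i, (w (.inl (some i)) - w (.inr i)) ^ 2 < w (.inl none) ^ 2} := by
    rw [ofPred_forall]
    refine iInter fun i ↦ ?_
    have hlt := setOf_lt (ι := Option ι ⊕ ι) ((.X (.inl (some i)) - .X (.inr i)) ^ 2)
      (.X (.inl none) ^ 2)
    simpa using hlt
  have hpos : IsSemialgebraic {v : Option ι → ℝ | 0 < v none} := by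
    simpa using lt (MvPolynomial.X (none : Option ι))
  have hnear := ((hs.preimage_comp Sum.inr).inter hball).exists_sum
  convert (hpos.inter hnear.compl).exists_option.compl using 1
  ext x
  have hdist : ∀ {ε : ℝ}, 0 < ε → ∀ y, dist x y < ε ↔ ∀ i, (x i - y i) ^ 2 < ε ^ 2 := fun hε y ↦ by
    simp only [dist_pi_lt_iff hε, Real.dist_eq, sq_lt_sq, abs_of_pos hε]
  simp only [Metric.mem_closure_iff, mem_compl_iff, mem_ofPred_eq, mem_inter_iff, mem_preimage,
    Option.elim_none, Option.elim_some, Sum.elim_inl, Sum.elim_inr, Sum.elim_comp_inr]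
  push Not
  exact forall₂_congr fun ε hε ↦ exists_congr fun y ↦ and_congr_right' (hdist hε y)

end IsSemialgebraic

section ConeAtInfinity

variable {n : ℕ} {X : Set (EuclideanSpace ℝ (Fin n))} {y : EuclideanSpace ℝ (Fin n)}

/-- The coordinates of `ℝ^n × ℝ`, with the last one indexed by `none`. They transport the notion
of semi-algebraic set, defined for subsets of `ι → ℝ`, to subsets of `ℝ^n × ℝ`. -/
noncomputable def prodCoordinates (n : ℕ) :
    EuclideanSpace ℝ (Fin n) × ℝ ≃ₜ (Option (Fin n) → ℝ) where
  toFun p o := o.elim p.2 p.1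
  invFun v := ((EuclideanSpace.equiv (Fin n) ℝ).symm (v ∘ some), v none)
  left_inv _ := rfl
  right_inv v := by ext (_ | i) <;> rfl
  continuous_toFun := continuous_pi fun
    | none => continuous_snd
    | some i => by simp only [Option.elim_some]; fun_prop
  continuous_invFun := by fun_prop

theorem prodCoordinates_symm_mem_deformAtInfinity {v : Option (Fin n) → ℝ} :
    (prodCoordinates n).symm v ∈ deformAtInfinity X ↔
      (0 < v none ∧ v none ≤ 1) ∧ ∃ x : Fin n → ℝ,
        (EuclideanSpace.equiv (Fin n) ℝ).symm x ∈ X ∧ ∀ i, v (some i) = v none * x i := by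
  constructor
  · rintro ⟨x, hx, t, ht, hv⟩
    rw [(prodCoordinates n).symm_apply_eq] at hv
    subst hv
    exact ⟨ht, x, hx, fun i ↦ rfl⟩
  · rintro ⟨ht, x, hx, hv⟩
    refine ⟨_, hx, _, ht, Prod.ext ?_ rfl⟩
    ext i
    exact hv i

theorem isSemialgebraic_deformAtInfinity (hX : IsSemialgebraicE X) :
    IsSemialgebraic ((prodCoordinates n).symm ⁻¹' deformAtInfinity X) := by
  have ht : IsSemialgebraic {v : Option (Fin n) → ℝ | 0 < v none ∧ v none ≤ 1} := by
    have h0 : IsSemialgebraic {v : Option (Fin n) → ℝ | 0 < v none} := by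
      simpa using IsSemialgebraic.lt (MvPolynomial.X (none : Option (Fin n)))
    have h1 : IsSemialgebraic {v : Option (Fin n) → ℝ | v none ≤ 1} := by
      simpa [compl_ofPred] using
        (IsSemialgebraic.setOf_lt 1 (MvPolynomial.X (none : Option (Fin n)))).compl
    exact h0.inter h1
  have hmul : IsSemialgebraic {w : Option (Fin n) ⊕ Fin n → ℝ |
      ∀ i, w (.inl (some i)) = w (.inl none) * w (.inr i)} := by
    rw [ofPred_forall]
    refine IsSemialgebraic.iInter fun i ↦ ?_
    simpa using IsSemialgebraic.setOf_eq (ι := Option (Fin n) ⊕ Fin n) (.X (.inl (some i)))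
      (.X (.inl none) * .X (.inr i))
  convert ht.inter ((hX.preimage_comp Sum.inr).inter hmul).exists_sum using 1
  ext v
  exact prodCoordinates_symm_mem_deformAtInfinity

theorem isSemialgebraicE_coneAtInfinity (hX : IsSemialgebraicE X) :
    IsSemialgebraicE (coneAtInfinity X) := by
  have hclosure := (isSemialgebraic_deformAtInfinity hX).closure
  rw [← (prodCoordinates n).symm.preimage_closure] at hclosure
  rw [IsSemialgebraicE]
  convert hclosure.preimage_eval fun o ↦ o.elim 0 MvPolynomial.X using 1
  ext x
  simp [coneAtInfinity, prodCoordinates, Function.comp_def]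

theorem isClosed_coneAtInfinity (X : Set (EuclideanSpace ℝ (Fin n))) :
    IsClosed (coneAtInfinity X) :=
  isClosed_closure.preimage (by fun_prop : Continuous fun y ↦ (y, (0 : ℝ)))

theorem zero_mem_coneAtInfinity (hX : X.Nonempty) : 0 ∈ coneAtInfinity X := by
  obtain ⟨x, hx⟩ := hX
  have h0 : (0 : ℝ) ∈ closure (Ioc 0 1) := by simp
  have hcont : Continuous fun t : ℝ ↦ (t • x, t) := by fun_prop
  have hmaps : MapsTo (fun t : ℝ ↦ (t • x, t)) (Ioc 0 1) (deformAtInfinity X) :=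
    fun t ht ↦ ⟨x, hx, t, ht, rfl⟩
  simpa [coneAtInfinity] using map_mem_closure hcont h0 hmaps

theorem nonempty_of_mem_coneAtInfinity (hy : y ∈ coneAtInfinity X) : X.Nonempty := by
  have hclosure : (closure (deformAtInfinity X)).Nonempty := ⟨_, hy⟩
  obtain ⟨_, x, hx, -⟩ := closure_nonempty_iff.1 hclosure
  exact ⟨x, hx⟩

theorem smul_mem_coneAtInfinity_of_pos (hy : y ∈ coneAtInfinity X) {l : ℝ} (hl : 0 < l) :
    l • y ∈ coneAtInfinity X := by
  -- Scaling by `l` maps `(t • x, t)` to `(lt • x, lt)`, which stays in `X₁` as soon as `lt ≤ 1`.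
  have hopen : IsOpen {p : EuclideanSpace ℝ (Fin n) × ℝ | l * p.2 < 1} :=
    isOpen_lt (by fun_prop) continuous_const
  have hmem : (y, (0 : ℝ)) ∈ closure ({p | l * p.2 < 1} ∩ deformAtInfinity X) :=
    hopen.inter_closure ⟨by simp, hy⟩
  have hmaps : MapsTo (fun p : EuclideanSpace ℝ (Fin n) × ℝ ↦ l • p)
      ({p | l * p.2 < 1} ∩ deformAtInfinity X) (deformAtInfinity X) := by
    rintro _ ⟨hlt, x, hx, t, ht, rfl⟩
    exact ⟨x, hx, l * t, ⟨mul_pos hl ht.1, hlt.le⟩, by simp [mul_smul]⟩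
  simpa [coneAtInfinity] using map_mem_closure (continuous_const_smul l) hmem hmaps

theorem smul_mem_coneAtInfinity (hy : y ∈ coneAtInfinity X) {l : ℝ} (hl : 0 ≤ l) :
    l • y ∈ coneAtInfinity X := by
  rcases hl.eq_or_lt with rfl | hl
  · rw [zero_smul]
    exact zero_mem_coneAtInfinity (nonempty_of_mem_coneAtInfinity hy)
  · exact smul_mem_coneAtInfinity_of_pos hy hl

end ConeAtInfinity

theorem coneAtInfinity_isClosed_semialgebraic_cone_general
    (n : ℕ) (X : Set (EuclideanSpace ℝ (Fin n))) (hXsa : IsSemialgebraicE X) :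
    IsClosed (coneAtInfinity X) ∧
      IsSemialgebraicE (coneAtInfinity X) ∧
      (∀ y ∈ coneAtInfinity X, ∀ l : ℝ, 0 ≤ l → l • y ∈ coneAtInfinity X) ∧
      (X.Nonempty → (0 : EuclideanSpace ℝ (Fin n)) ∈ coneAtInfinity X) :=
  ⟨isClosed_coneAtInfinity X, isSemialgebraicE_coneAtInfinity hXsa,
    fun _ hy _ hl ↦ smul_mem_coneAtInfinity hy hl, zero_mem_coneAtInfinity⟩

/-- Let `X ⊂ ℝ^n` be a closed semi-algebraic set,
`X₁ = {(tx,t) : x ∈ X, t ∈ (0,1]}` and `X₀ = π_{ℝ^n}(closure X₁ ∩ π_ℝ^{-1}(0))` its tangent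
cone at infinity.  Then `X₀` is a closed semi-algebraic cone: `λy ∈ X₀` for every `y ∈ X₀`
and `λ ≥ 0`, and `0 ∈ X₀` whenever `X` is nonempty. -/
theorem coneAtInfinity_isClosed_semialgebraic_cone
    (n : ℕ) (X : Set (EuclideanSpace ℝ (Fin n)))
    (hXc : IsClosed X) (hXsa : IsSemialgebraicE X) :
    IsClosed (coneAtInfinity X) ∧
      IsSemialgebraicE (coneAtInfinity X) ∧
      (∀ y ∈ coneAtInfinity X, ∀ l : ℝ, 0 ≤ l → l • y ∈ coneAtInfinity X) ∧
      (X.Nonempty → (0 : EuclideanSpace ℝ (Fin n)) ∈ coneAtInfinity X) :=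
  coneAtInfinity_isClosed_semialgebraic_cone_general n X hXsa
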